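/- Let p > 1 and 0 < r ≤ p be real numbers, set c := r/(p−1) and c(p) := p^p(p−1)^{1−p}. Let ν be the unique probability measure supported in [0, c(p)] with moments ∫ x^n dν(x) = C(np + r − 1, n) for all n, and let η be the probability measure on [0,1] with density c·x^{c−1}. Then the pushforward of the product measure ν ⊗ η under the multiplication map (x,y) ↦ xy (the Mellin convolution ν ∘ η) is a probability measure whose n-th moment equals C(np + r, n) · r/(np + r) for every natural number n, i.e. it equals the measure μ(p,r) with the Raney numbers as moments. -/

import Mathlib

open MeasureTheory Real

/-- Generalized binomial coefficient `C(a,n) = a(a-1)⋯(a-n+1)/n!`. -/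
noncomputable def gbinom (a : ℝ) (n : ℕ) : ℝ :=
  (∏ i ∈ Finset.range n, (a - i)) / (n.factorial : ℝ)

/-!
The map `x ↦ x ^ n` is multiplicative, so the `n`-th moment of a Mellin convolution is the product
of the `n`-th moments of its factors. The `n`-th moment of the law with density `c * x ^ (c - 1)` on
`(0, 1]` is `c / (n + c)`; for `c = r / (p - 1)` and `a = n * p + r` this is `r / (a - n)`, which is
the factor that the absorption identity `C(a - 1, n) * a = C(a, n) * (a - n)` needs to turn
`C(a - 1, n)` into the Raney number `C(a, n) * r / a`.
-/

theorem gbinom_sub_one_mul (a : ℝ) (n : ℕ) : gbinom (a - 1) n * a = gbinom a n * (a - n) := by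
  have absorption : (descPochhammer ℝ n).eval (a - 1) * a
      = (descPochhammer ℝ n).eval a * (a - n) := by
    rw [← descPochhammer_succ_eval, descPochhammer_succ_left]
    simp [mul_comm]
  simp only [gbinom, ← descPochhammer_eval_eq_prod_range, div_mul_eq_mul_div, absorption]

theorem gbinom_sub_one_div {a : ℝ} {n : ℕ} (ha : a ≠ 0) (han : a - n ≠ 0) :
    gbinom (a - 1) n / (a - n) = gbinom a n / a :=
  (div_eq_div_iff han ha).2 (gbinom_sub_one_mul a n)

theorem integral_mconv_of_monoidHom {M 𝕜 : Type*} [Monoid M] [MeasurableSpace M]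
    [MeasurableMul₂ M] [RCLike 𝕜] (f : M →* 𝕜) (hf : Measurable f) (μ ν : Measure M)
    [SFinite μ] [SFinite ν] :
    ∫ x, f x ∂(μ ∗ₘ ν) = (∫ x, f x ∂μ) * ∫ x, f x ∂ν := by
  rw [Measure.mconv, integral_map measurable_mul.aemeasurable hf.aestronglyMeasurable]
  simp only [map_mul]
  exact integral_prod_mul f f

/-- The law on `(0, 1]` with density `c * x ^ (c - 1)`, that is the beta distribution with
parameters `c` and `1`: the factor `η` of the Mellin convolution. It is a probability measure only
for `0 < c`. -/
noncomputable def powerMeasure (c : ℝ) : Measure ℝ :=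
  (volume.restrict (Set.Ioc (0 : ℝ) 1)).withDensity fun x => ENNReal.ofReal (c * x ^ (c - 1))

theorem integral_rpow_powerMeasure {c s : ℝ} (hc : 0 ≤ c) (hs : 0 < s + c) :
    ∫ x, x ^ s ∂powerMeasure c = c / (s + c) := by
  have density_smul : ∀ x ∈ Set.Ioc (0 : ℝ) 1,
      (ENNReal.ofReal (c * x ^ (c - 1))).toReal • x ^ s = c * x ^ (s + c - 1) := by
    intro x hx
    rw [ENNReal.toReal_ofReal (mul_nonneg hc (rpow_nonneg hx.1.le _)), smul_eq_mul, mul_assoc,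
      ← rpow_add hx.1, sub_add_eq_add_sub, add_comm c]
  calc ∫ x, x ^ s ∂powerMeasure c
      = ∫ x in Set.Ioc (0 : ℝ) 1, (ENNReal.ofReal (c * x ^ (c - 1))).toReal • x ^ s :=
        integral_withDensity_eq_integral_toReal_smul (by fun_prop)
          (.of_forall fun _ => ENNReal.ofReal_lt_top) _
    _ = ∫ x in Set.Ioc (0 : ℝ) 1, c * x ^ (s + c - 1) :=
        setIntegral_congr_fun measurableSet_Ioc density_smul
    _ = c * ∫ x in (0 : ℝ)..1, x ^ (s + c - 1) := by
        rw [← intervalIntegral.integral_of_le zero_le_one, intervalIntegral.integral_const_mul]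
    _ = c / (s + c) := by
        rw [integral_rpow (.inl (by linarith)), sub_add_cancel, one_rpow, zero_rpow hs.ne',
          sub_zero, mul_one_div]

theorem integral_pow_powerMeasure {c : ℝ} (hc : 0 < c) (n : ℕ) :
    ∫ x, x ^ n ∂powerMeasure c = c / (n + c) := by
  simpa only [rpow_natCast] using
    integral_rpow_powerMeasure (s := n) hc.le (add_pos_of_nonneg_of_pos n.cast_nonneg hc)

theorem isProbabilityMeasure_powerMeasure {c : ℝ} (hc : 0 < c) :
    IsProbabilityMeasure (powerMeasure c) := by
  rw [isProbabilityMeasure_iff_real]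
  simpa [hc.ne'] using integral_pow_powerMeasure hc 0

theorem mellin_nu_eta_eq_mu (p r : ℝ) (hp : 1 < p) (hr0 : 0 < r) (hrp : r ≤ p)
    (ν : Measure ℝ) (hprob : IsProbabilityMeasure ν)
    (hsupp : ν (Set.Icc 0 (p ^ p * (p - 1) ^ (1 - p)))ᶜ = 0)
    (hmom : ∀ n : ℕ, (∫ x, x ^ n ∂ν) = gbinom ((n : ℝ) * p + r - 1) n) :
    ∀ η μ : Measure ℝ,
      η = (volume.restrict (Set.Ioc (0:ℝ) 1)).withDensity
            (fun x => ENNReal.ofReal ((r / (p - 1)) * x ^ (r / (p - 1) - 1))) →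
      μ = Measure.map (fun q : ℝ × ℝ => q.1 * q.2) (ν.prod η) →
      IsProbabilityMeasure μ ∧
      ∀ n : ℕ, (∫ x, x ^ n ∂μ)
        = gbinom ((n : ℝ) * p + r) n * r / ((n : ℝ) * p + r) := by
  intro η μ hη hμ
  have hp1 : 0 < p - 1 := sub_pos.2 hp
  have hc : 0 < r / (p - 1) := div_pos hr0 hp1
  obtain rfl : η = powerMeasure (r / (p - 1)) := hη
  obtain rfl : μ = ν ∗ₘ powerMeasure (r / (p - 1)) := hμ
  have := isProbabilityMeasure_powerMeasure hc
  refine ⟨inferInstance, fun n => ?_⟩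
  have a_pos : 0 < n * p + r := by positivity
  have a_sub : n * p + r - n = n * (p - 1) + r := by ring
  have a_sub_pos : 0 < n * p + r - n := by rw [a_sub]; positivity
  calc ∫ x, x ^ n ∂(ν ∗ₘ powerMeasure (r / (p - 1)))
      = (∫ x, x ^ n ∂ν) * ∫ x, x ^ n ∂powerMeasure (r / (p - 1)) :=
        integral_mconv_of_monoidHom (powMonoidHom n) (measurable_id.pow_const n) ν _
    _ = gbinom (n * p + r - 1) n * (r / (p - 1) / (n + r / (p - 1))) := by
        rw [hmom, integral_pow_powerMeasure hc]
    _ = gbinom (n * p + r - 1) n / (n * p + r - n) * r := by rw [a_sub]; field_simp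
    _ = gbinom (n * p + r) n * r / (n * p + r) := by
        rw [gbinom_sub_one_div a_pos.ne' a_sub_pos.ne', div_mul_eq_mul_div]
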